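/- Small arithmetic derivatives satisfying independence: let a, b be coprime positive integers with (a,b) ≠ (1,1), let c = a + b, and let r = ω(abc) − 1 (so r ≥ 1). For any ℤ-linearly independent derivations ψ₁, …, ψ_r ∈ 𝒯(a,b) there is at least one index 1 ≤ i₀ ≤ r such that a, b are ψ_{i₀}-independent. Furthermore, such a family ψ₁, …, ψ_r can be chosen so that in addition ‖ψ_{i₀}‖ ≤ (ω(abc)/(2 log 2)) · c · log c. -/

import Mathlib

open Finset

/-- The arithmetic derivative attached to `ψ`: `d^ψ(n) = Σ_{p ∣ n} (n·v_p(n)/p)·ψ(p)`,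
with `d^ψ(0) = 0` (empty sum). Each term is written as `(n/p)·v_p(n)·ψ(p)`, exact since `p ∣ n`. -/
def dpsi (ψ : ℕ → ℤ) (n : ℤ) : ℤ :=
  ∑ p ∈ n.natAbs.primeFactors, (n / (p : ℤ)) * (n.natAbs.factorization p : ℤ) * ψ p

/-- A derivation: a function on primes (zero off primes) with finite norm. -/
def IsDeriv (ψ : ℕ → ℤ) : Prop :=
  (∀ p : ℕ, ¬ p.Prime → ψ p = 0) ∧ ∃ B : ℤ, ∀ p : ℕ, |ψ p| ≤ B

/-- The norm `‖ψ‖ = sup_p |ψ(p)|`. -/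
noncomputable def dNorm (ψ : ℕ → ℤ) : ℝ := ⨆ p : ℕ, (|ψ p| : ℝ)

/-- Membership in `𝒯(a,b)`: a derivation supported on the primes dividing `ab(a+b)`
satisfying `d^ψ(a+b) = d^ψ(a) + d^ψ(b)`. -/
def MemT (a b : ℕ) (ψ : ℕ → ℤ) : Prop :=
  IsDeriv ψ ∧ (∀ p : ℕ, p.Prime → ¬ p ∣ (a * b * (a + b)) → ψ p = 0) ∧
    dpsi ψ ((a : ℤ) + (b : ℤ)) = dpsi ψ (a : ℤ) + dpsi ψ (b : ℤ)

/-- The `ψ`-Wronskian `W^ψ(a,b) = a·d^ψ(b) − b·d^ψ(a)`. -/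
def Wpsi (ψ : ℕ → ℤ) (a b : ℤ) : ℤ := a * dpsi ψ b - b * dpsi ψ a

/-- Membership in `𝒯°(a,b)`: elements of `𝒯(a,b)` for which `a, b` are `ψ`-dependent. -/
def MemT0 (a b : ℕ) (ψ : ℕ → ℤ) : Prop := MemT a b ψ ∧ Wpsi ψ (a : ℤ) (b : ℤ) = 0

/-- The radical of `n`: product of the distinct primes dividing `n`. -/
def radN (n : ℕ) : ℕ := ∏ p ∈ n.primeFactors, p

/-- The Small Derivatives Conjecture with exponent `η`: for all but finitely many triples of
coprime positive integers `(a,b,c)` with `a+b=c`, not of the form `(1,N,q)` with `q` prime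
up to order, there is `ψ ∈ 𝒯(a,b)` with `a,b` `ψ`-independent and `‖ψ‖ < c^η`. -/
def SDC (η : ℝ) : Prop :=
  {t : ℕ × ℕ × ℕ | 0 < t.1 ∧ 0 < t.2.1 ∧ t.1 + t.2.1 = t.2.2 ∧ Nat.Coprime t.1 t.2.1 ∧
    ¬ (∃ N q : ℕ, q.Prime ∧ ({t.1, t.2.1, t.2.2} : Multiset ℕ) = {1, N, q}) ∧
    ¬ ∃ ψ : ℕ → ℤ, MemT t.1 t.2.1 ψ ∧ Wpsi ψ (t.1 : ℤ) (t.2.1 : ℤ) ≠ 0 ∧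
      dNorm ψ < (t.2.2 : ℝ) ^ η}.Finite

def Dc (n p : ℕ) : ℤ := ((n : ℤ) / (p : ℤ)) * (n.factorization p : ℤ)

lemma dpsi_eq (ψ : ℕ → ℤ) (n : ℕ) (S : Finset ℕ) (h : n.primeFactors ⊆ S) :
    dpsi ψ (n : ℤ) = ∑ p ∈ S, Dc n p * ψ p := by
  unfold dpsi Dc
  rw [Int.natAbs_natCast]
  apply Finset.sum_subset h
  intro x _ hx
  have : n.factorization x = 0 := by
    exact Finsupp.notMem_support_iff.1 (by rwa [Nat.support_factorization])
  simp [this]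

lemma Dc_zero {n p : ℕ} (h : p ∉ n.primeFactors) : Dc n p = 0 := by
  have : n.factorization p = 0 := by
    exact Finsupp.notMem_support_iff.1 (by rwa [Nat.support_factorization])
  simp [Dc, this]

lemma Dc_pos {n p : ℕ} (h : p ∈ n.primeFactors) : 0 < Dc n p := by
  have hp := Nat.prime_of_mem_primeFactors h
  have hd := Nat.dvd_of_mem_primeFactors h
  have hn : n ≠ 0 := (Nat.mem_primeFactors.1 h).2.2
  unfold Dc
  apply mul_pos
  · have : 0 < n / p := Nat.div_pos (Nat.le_of_dvd (Nat.pos_of_ne_zero hn) hd) hp.pos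
    exact_mod_cast this
  · exact_mod_cast hp.factorization_pos_of_dvd hn hd

lemma Dc_le {n p c : ℕ} (h : p ∈ n.primeFactors) (hnc : n ≤ c) :
    (Dc n p : ℝ) ≤ (c : ℝ) * Real.log c / (2 * Real.log 2) := by
  have hp := Nat.prime_of_mem_primeFactors h
  have hn : n ≠ 0 := (Nat.mem_primeFactors.1 h).2.2
  have hl2 : 0 < Real.log 2 := Real.log_pos (by norm_num)
  have h1 : ((n / p : ℕ) : ℝ) ≤ c / 2 := by
    refine le_trans Nat.cast_div_le ?_
    have : (2 : ℝ) ≤ p := by exact_mod_cast hp.two_le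
    have : (n : ℝ) ≤ c := by exact_mod_cast hnc
    gcongr
  have h2 : (n.factorization p : ℝ) ≤ Real.log c / Real.log 2 := by
    rw [le_div_iff₀ hl2, ← Real.log_pow]
    apply Real.log_le_log (by positivity)
    have h3 : 2 ^ n.factorization p ≤ c :=
      (Nat.pow_le_pow_left hp.two_le _).trans
        ((Nat.le_of_dvd (Nat.pos_of_ne_zero hn) (Nat.ordProj_dvd n p)).trans hnc)
    exact_mod_cast h3
  have h4 : (Dc n p : ℝ) = ((n / p : ℕ) : ℝ) * (n.factorization p : ℝ) := by
    unfold Dc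
    rw [← Int.natCast_div]
    push_cast
    rfl
  rw [h4]
  calc _ ≤ (c / 2 : ℝ) * (Real.log c / Real.log 2) := by gcongr
    _ = _ := by field_simp

lemma dpsi_sum {ι : Type*} [Fintype ι] (g : ι → ℤ) (f : ι → ℕ → ℤ) (n : ℤ) :
    dpsi (∑ i, g i • f i) n = ∑ i, g i * dpsi (f i) n := by
  unfold dpsi
  simp only [Finset.sum_apply, Pi.smul_apply, smul_eq_mul, Finset.mul_sum]
  rw [Finset.sum_comm]
  exact Finset.sum_congr rfl fun i _ => Finset.sum_congr rfl fun j _ => by ring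

lemma dpsi_single (ψ : ℕ → ℤ) (n q : ℕ) (h : ∀ p ∈ n.primeFactors, p ≠ q → ψ p = 0) :
    dpsi ψ (n : ℤ) = Dc n q * ψ q := by
  rw [dpsi_eq ψ n (insert q n.primeFactors) (Finset.subset_insert _ _)]
  apply Finset.sum_eq_single_of_mem _ (Finset.mem_insert_self _ _)
  intro p hp hpq
  rw [h p ((Finset.mem_insert.1 hp).resolve_left hpq) hpq, mul_zero]

/-- Small arithmetic derivatives satisfying independence. -/
theorem small_derivatives_independence (a b : ℕ) (ha : 0 < a) (hb : 0 < b)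
    (hab : Nat.Coprime a b) (hne : ¬ (a = 1 ∧ b = 1)) :
    1 ≤ (a * b * (a + b)).primeFactors.card - 1 ∧
    (∀ ψs : Fin ((a * b * (a + b)).primeFactors.card - 1) → (ℕ → ℤ),
      (∀ i, MemT a b (ψs i)) → LinearIndependent ℤ ψs →
      ∃ i, Wpsi (ψs i) (a : ℤ) (b : ℤ) ≠ 0) ∧
    (∃ ψs : Fin ((a * b * (a + b)).primeFactors.card - 1) → (ℕ → ℤ),
      (∀ i, MemT a b (ψs i)) ∧ LinearIndependent ℤ ψs ∧
      ∃ i, Wpsi (ψs i) (a : ℤ) (b : ℤ) ≠ 0 ∧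
        dNorm (ψs i) ≤ ((a * b * (a + b)).primeFactors.card : ℝ) / (2 * Real.log 2) *
          ((a + b : ℕ) : ℝ) * Real.log ((a + b : ℕ) : ℝ)) := by
  classical
  set c := a + b with hc
  set S := (a * b * c).primeFactors with hS
  have hc0 : 0 < c := by omega
  have hcc : ((a : ℤ) + (b : ℤ)) = ((c : ℕ) : ℤ) := by rw [hc]; push_cast; rfl
  have hac : Nat.Coprime a c := by rw [hc]; simpa using hab
  have hbc : Nat.Coprime b c := by rw [hc]; simpa using hab.symm
  have dab := hab.disjoint_primeFactors
  have dac := hac.disjoint_primeFactors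
  have dbc := hbc.disjoint_primeFactors
  have hSu : ∀ p, p ∈ S ↔ (p ∈ a.primeFactors ∨ p ∈ b.primeFactors ∨ p ∈ c.primeFactors) := by
    intro p
    rw [hS, Nat.primeFactors_mul (by positivity) (by positivity),
      Nat.primeFactors_mul (by positivity) (by positivity)]
    simp
  have nab : ∀ p ∈ a.primeFactors, p ∉ b.primeFactors := fun p hp => Finset.disjoint_left.1 dab hp
  have nac : ∀ p ∈ a.primeFactors, p ∉ c.primeFactors := fun p hp => Finset.disjoint_left.1 dac hp
  have nbc : ∀ p ∈ b.primeFactors, p ∉ c.primeFactors := fun p hp => Finset.disjoint_left.1 dbc hp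
  have sa : a.primeFactors ⊆ S := fun p hp => (hSu p).2 (Or.inl hp)
  have sb : b.primeFactors ⊆ S := fun p hp => (hSu p).2 (Or.inr (Or.inl hp))
  have sc : c.primeFactors ⊆ S := fun p hp => (hSu p).2 (Or.inr (Or.inr hp))
  obtain ⟨p0, hp0⟩ : c.primeFactors.Nonempty := Nat.nonempty_primeFactors.2 (by omega)
  obtain ⟨q0, hq0⟩ : ∃ q, q ∈ a.primeFactors ∨ q ∈ b.primeFactors := by
    by_cases h : 1 < a
    · obtain ⟨q, hq⟩ := Nat.nonempty_primeFactors.2 h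
      exact ⟨q, Or.inl hq⟩
    · obtain ⟨q, hq⟩ := Nat.nonempty_primeFactors.2 (show 1 < b by omega)
      exact ⟨q, Or.inr hq⟩
  have hq0c : q0 ∉ c.primeFactors := by
    rcases hq0 with h | h
    · exact nac _ h
    · exact nbc _ h
  have hqp : q0 ≠ p0 := fun h => hq0c (h ▸ hp0)
  have hp0a : p0 ∉ a.primeFactors := fun h => nac _ h hp0
  have hp0b : p0 ∉ b.primeFactors := fun h => nbc _ h hp0
  have hp0S : p0 ∈ S := sc hp0
  have hq0S : q0 ∈ S := by
    rcases hq0 with h | h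
    · exact sa h
    · exact sb h
  have hq0E : q0 ∈ S.erase p0 := Finset.mem_erase.2 ⟨hqp, hq0S⟩
  have cE : (S.erase p0).card = S.card - 1 := Finset.card_erase_of_mem hp0S
  have cpos : 0 < (S.erase p0).card := Finset.card_pos.2 ⟨q0, hq0E⟩
  have hSprime : ∀ p ∈ S, p.Prime := fun p hp => Nat.prime_of_mem_primeFactors hp
  have hSdvd : ∀ p, p.Prime → (¬ p ∣ a * b * c ↔ p ∉ S) := by
    intro p hp
    rw [hS, Nat.mem_primeFactors]
    have : a * b * c ≠ 0 := by positivity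
    tauto
  refine ⟨by omega, ?_, ?_⟩
  · intro ψs hT hli
    by_contra! hW
    set U := (S.erase p0).erase q0 with hU
    have cU : U.card = (S.erase p0).card - 1 := Finset.card_erase_of_mem hq0E
    have key : LinearIndependent ℤ (fun i => (fun u : U => ψs i u.1)) := by
      rw [Fintype.linearIndependent_iff] at hli ⊢
      intro g hg
      apply hli g
      set ψ := ∑ i, g i • ψs i with hψ
      have hoff : ∀ p, p ∉ S → ψ p = 0 := by
        intro p hp
        rw [hψ, Finset.sum_apply]
        apply Finset.sum_eq_zero
        intro i _
        have : ψs i p = 0 := by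
          by_cases hpp : p.Prime
          · exact (hT i).2.1 p hpp ((hSdvd p hpp).2 hp)
          · exact (hT i).1.1 p hpp
        simp [this]
      have hUz : ∀ p ∈ U, ψ p = 0 := by
        intro p hp
        have := congrFun hg ⟨p, hp⟩
        rw [hψ]
        simpa [Finset.sum_apply] using this
      have hz : ∀ p, p ≠ p0 → p ≠ q0 → ψ p = 0 := by
        intro p h1 h2
        by_cases hp : p ∈ S
        · exact hUz p (by simp [hU, h1, h2, hp])
        · exact hoff p hp
      have e1 : dpsi ψ (c : ℤ) = dpsi ψ (a : ℤ) + dpsi ψ (b : ℤ) := by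
        rw [hψ, dpsi_sum, dpsi_sum, dpsi_sum, ← Finset.sum_add_distrib]
        refine Finset.sum_congr rfl fun i _ => ?_
        rw [← hcc, (hT i).2.2, mul_add]
      have e2 : (a : ℤ) * dpsi ψ (b : ℤ) - (b : ℤ) * dpsi ψ (a : ℤ) = 0 := by
        rw [hψ, dpsi_sum, dpsi_sum, Finset.mul_sum, Finset.mul_sum, ← Finset.sum_sub_distrib]
        refine Finset.sum_eq_zero fun i _ => ?_
        have := hW i
        unfold Wpsi at this
        linear_combination g i * this
      have fa : dpsi ψ (a : ℤ) = Dc a q0 * ψ q0 :=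
        dpsi_single _ _ _ fun p hp h => hz p (fun h' => hp0a (h' ▸ hp)) h
      have fb : dpsi ψ (b : ℤ) = Dc b q0 * ψ q0 :=
        dpsi_single _ _ _ fun p hp h => hz p (fun h' => hp0b (h' ▸ hp)) h
      have fc : dpsi ψ (c : ℤ) = Dc c p0 * ψ p0 :=
        dpsi_single _ _ _ fun p hp h => hz p h (fun h' => hq0c (h' ▸ hp))
      have zq : ψ q0 = 0 := by
        rw [fa, fb] at e2
        rcases hq0 with h | h
        · rw [Dc_zero (nab _ h)] at e2
          have := (Dc_pos h).ne'
          have hb' : b ≠ 0 := by positivity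
          simpa [this, hb'] using e2
        · rw [Dc_zero (fun h' => nab _ h' h)] at e2
          have := (Dc_pos h).ne'
          have ha' : a ≠ 0 := by positivity
          simpa [this, ha'] using e2
      have zp : ψ p0 = 0 := by
        rw [fa, fb, fc, zq] at e1
        simpa [(Dc_pos hp0).ne'] using e1
      funext p
      by_cases h1 : p = p0
      · rw [h1, zp]; rfl
      · by_cases h2 : p = q0
        · rw [h2, zq]; rfl
        · exact hz p h1 h2
    have := key.fintype_card_le_finrank
    simp at this
    omega
  · set L : ℕ → ℤ := fun p => Dc c p - Dc a p - Dc b p with hL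
    have Lp0 : L p0 = Dc c p0 := by simp [hL, Dc_zero hp0a, Dc_zero hp0b]
    have Lp0ne : L p0 ≠ 0 := by rw [Lp0]; exact (Dc_pos hp0).ne'
    have hl2 : 0 < Real.log 2 := Real.log_pos (by norm_num)
    have hlc : 0 ≤ Real.log (c : ℝ) := Real.log_natCast_nonneg c
    have Lb : ∀ p ∈ S, |(L p : ℝ)| ≤ (c : ℝ) * Real.log c / (2 * Real.log 2) := by
      intro p hp
      rcases (hSu p).1 hp with h | h | h
      · have : L p = - Dc a p := by simp [hL, Dc_zero (nab _ h), Dc_zero (nac _ h)]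
        rw [this, Int.cast_neg, abs_neg, abs_of_pos (by exact_mod_cast Dc_pos h)]
        exact Dc_le h (by omega)
      · have : L p = - Dc b p := by
          simp [hL, Dc_zero (fun h' => nab _ h' h), Dc_zero (nbc _ h)]
        rw [this, Int.cast_neg, abs_neg, abs_of_pos (by exact_mod_cast Dc_pos h)]
        exact Dc_le h (by omega)
      · have : L p = Dc c p := by
          simp [hL, Dc_zero (fun h' => nac _ h' h), Dc_zero (fun h' => nbc _ h' h)]
        rw [this, abs_of_pos (by exact_mod_cast Dc_pos h)]
        exact Dc_le h le_rfl
    set F : ℕ → ℕ → ℤ := fun q x => if x = p0 then L q else if x = q then - L p0 else 0 with hF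
    have Fp0 : ∀ q, F q p0 = L q := fun q => by simp [hF]
    have Fq : ∀ q, q ≠ p0 → F q q = - L p0 := fun q h => by simp [hF, h]
    have Fo : ∀ q x, x ≠ p0 → x ≠ q → F q x = 0 := fun q x h h' => by simp [hF, h, h']
    have Foff : ∀ q ∈ S, ∀ x, x ∉ S → F q x = 0 := fun q hq x hx =>
      Fo q x (fun h => hx (h ▸ hp0S)) (fun h => hx (h ▸ hq))
    let e : Fin (S.card - 1) ≃ S.erase p0 := ((S.erase p0).equivFinOfCardEq cE).symm
    have eS : ∀ i, (e i).1 ∈ S := fun i => Finset.mem_of_mem_erase (e i).2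
    have ene : ∀ i, (e i).1 ≠ p0 := fun i => Finset.ne_of_mem_erase (e i).2
    refine ⟨fun i => F (e i).1, ?_, ?_, e.symm ⟨q0, hq0E⟩, ?_, ?_⟩
    · intro i
      refine ⟨⟨?_, max |L (e i).1| |L p0|, ?_⟩, ?_, ?_⟩
      · intro p hp
        exact Foff _ (eS i) p fun h => hp (hSprime p h)
      · intro p
        beta_reduce
        by_cases h1 : p = p0
        · rw [h1, Fp0]; exact le_max_left _ _
        · by_cases h2 : p = (e i).1
          · rw [h2, Fq _ (ene i), abs_neg]; exact le_max_right _ _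
          · rw [Fo _ _ h1 h2]; simp
      · intro p hp hd
        exact Foff _ (eS i) p ((hSdvd p hp).1 hd)
      · rw [hcc, dpsi_eq _ c S sc, dpsi_eq _ a S sa, dpsi_eq _ b S sb, ← sub_eq_zero,
          ← Finset.sum_add_distrib, ← Finset.sum_sub_distrib]
        have : ∀ p ∈ S, (Dc c p * F (e i).1 p - (Dc a p * F (e i).1 p + Dc b p * F (e i).1 p))
            = L p * F (e i).1 p := fun p _ => by simp only [hL]; ring
        rw [Finset.sum_congr rfl this, ← Finset.add_sum_erase _ _ hp0S,
          ← Finset.add_sum_erase _ _ (e i).2, Finset.sum_eq_zero, Fp0, Fq _ (ene i)]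
        · ring
        · intro x hx
          simp only [Finset.mem_erase] at hx
          rw [Fo _ _ hx.2.1 hx.1, mul_zero]
    · rw [Fintype.linearIndependent_iff]
      intro g hg i
      have h1 := congrFun hg (e i).1
      rw [Finset.sum_apply, Finset.sum_eq_single_of_mem i (Finset.mem_univ _)] at h1
      · simp only [Pi.smul_apply, smul_eq_mul, Fq _ (ene i), Pi.zero_apply] at h1
        simpa [Lp0ne] using h1
      · intro j _ hj
        have : (e i).1 ≠ (e j).1 := fun h => hj (e.injective (Subtype.ext h)).symm
        simp [Fo _ _ (ene i) this]
    · simp only [Equiv.apply_symm_apply]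
      have fa : dpsi (F q0) (a : ℤ) = Dc a q0 * F q0 q0 :=
        dpsi_single _ _ _ fun p hp h => Fo _ p (fun h' => hp0a (h' ▸ hp)) h
      have fb : dpsi (F q0) (b : ℤ) = Dc b q0 * F q0 q0 :=
        dpsi_single _ _ _ fun p hp h => Fo _ p (fun h' => hp0b (h' ▸ hp)) h
      unfold Wpsi
      rw [fa, fb, Fq _ hqp]
      rcases hq0 with h | h
      · rw [Dc_zero (nab _ h)]
        have := (Dc_pos h).ne'
        have hb' : b ≠ 0 := by positivity
        simp [this, hb', Lp0ne]
      · rw [Dc_zero (fun h' => nab _ h' h)]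
        have := (Dc_pos h).ne'
        have ha' : a ≠ 0 := by positivity
        simp [this, ha', Lp0ne]
    · simp only [Equiv.apply_symm_apply]
      have hB : (c : ℝ) * Real.log c / (2 * Real.log 2) ≤
          (S.card : ℝ) / (2 * Real.log 2) * (c : ℝ) * Real.log (c : ℝ) := by
        have h1 : (1 : ℝ) ≤ S.card := by
          have : 1 ≤ S.card := Finset.card_pos.2 ⟨p0, hp0S⟩
          exact_mod_cast this
        have h0 : 0 ≤ (c : ℝ) * Real.log c / (2 * Real.log 2) := by positivity
        calc _ = 1 * ((c : ℝ) * Real.log c / (2 * Real.log 2)) := by ring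
          _ ≤ S.card * ((c : ℝ) * Real.log c / (2 * Real.log 2)) := by gcongr
          _ = _ := by ring
      refine le_trans ?_ hB
      unfold dNorm
      apply ciSup_le
      intro p
      by_cases h1 : p = p0
      · rw [h1, Fp0]; exact Lb _ hq0S
      · by_cases h2 : p = q0
        · rw [h2, Fq _ hqp, Int.cast_neg, abs_neg]; exact Lb _ hp0S
        · rw [Fo _ _ h1 h2, Int.cast_zero, abs_zero]; positivity
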